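/- Let Ω2 be the ℤ-span in Λ of α−γ, β−δ, e_1−g_1, e_3−g_3, f_1−h_1, f_2−h_2, f_3−h_3, f_4−h_4, and let R be the orthogonal complement of Ω2 in Ω4. Then Ω4 is an overlattice of Ω2 ⊕ R with Ω4/(Ω2 ⊕ R) ≅ (ℤ/2ℤ)^4. -/

import Mathlib

/-!
Write a vector of `Λ ⊗ ℚ` as `(e, f, g, h; a₁, a₂; σ, ρ, ω₁, ω₂)`. Inside `Λ`, the lattice `Ω₄` is
cut out by `e + f + g + h = 0`, `a₁ + a₂ = 0` and `ρ = ω₁ = ω₂ = 0` (`mem_Om4`); here `R` is the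
part of `Ω₄` with `e = g` and `f = h`, that is, the part fixed by `τ²` (`mem_Rlat`), while `Ω₂` lies
in the part with `e = -g`, `f = -h`. Hence `Ω₂ ∩ R = 0`, and a decomposition of `x` along `Ω₂ ⊕ R`
can only be `x = (x - τ²x)/2 + (x + τ²x)/2`.

The class of `x` modulo `Ω₂ ⊕ R` therefore depends only on `x + τ²x`, hence on `y = e + g` and the
coordinates `a₁`, `σ`. It is detected by the four functionals `y₃`, `y₁ + y₂ - y₄`, `2y₂`,
`y₁ + 2a₁` (`glueFun`). They are integral on `Ω₄`, zero on `Ω₂` and even on `R`. Conversely, if all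
four are even on `x ∈ Ω₄`, then `(x - τ²x)/2` has integral coefficients on the generators of `Ω₂`
(`mem_sup_of_even`). So their reduction mod `2` is a homomorphism `Ω₄ → (ℤ/2ℤ)⁴` with kernel
`Ω₂ ⊕ R` (`ker_glueMap`), and it is onto, as the values at `g₃ - h₃`, `g₁ - h₁`, `α - δ`, `g₂ - h₂`
show (`glueMap_surjective`). The integrality statements come from writing a vector of `Λ` through its
integral coefficients on the thirty generators (`exists_coeff_of_mem_Lam`). In the code,
coordinates are numbered from `0` to `21`.
-/

noncomputable section
open Matrix

namespace K3Paper

/-! ### Generic lattice machinery over ℚ-ambient spaces -/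

abbrev Amb (n : ℕ) := Fin n → ℚ

/-- bilinear form attached to a Gram matrix -/
def bq {n : ℕ} (G : Matrix (Fin n) (Fin n) ℚ) (x y : Amb n) : ℚ := x ⬝ᵥ (G *ᵥ y)

/-- the form, as a ℤ-linear map in the first variable (second variable fixed) -/
def bqL {n : ℕ} (G : Matrix (Fin n) (Fin n) ℚ) (y : Amb n) : Amb n →ₗ[ℤ] ℚ where
  toFun x := bq G x y
  map_add' x x' := by simp [bq, add_dotProduct]
  map_smul' k x := by
    show (k • x) ⬝ᵥ (G *ᵥ y) = k • (x ⬝ᵥ (G *ᵥ y))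
    exact smul_dotProduct k x (G *ᵥ y)

/-- the image of ℤ inside ℚ, as a ℤ-submodule -/
def intQ : Submodule ℤ ℚ := LinearMap.range (Algebra.linearMap ℤ ℚ)

/-- the dual lattice of the ℤ-span of `T` (inside the ℚ-span of `T`) -/
def dualLat {n : ℕ} (G : Matrix (Fin n) (Fin n) ℚ) (T : Set (Amb n)) : Submodule ℤ (Amb n) :=
  (Submodule.span ℚ T).restrictScalars ℤ ⊓ ⨅ y ∈ T, Submodule.comap (bqL G y) intQ

/-- the discriminant group `A_S = S^*/S` of the ℤ-span of `T` -/
abbrev disc {n : ℕ} (G : Matrix (Fin n) (Fin n) ℚ) (T : Set (Amb n)) :=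
  ↥(dualLat G T) ⧸ (Submodule.span ℤ T).comap (dualLat G T).subtype

/-- class of a dual vector in the discriminant group -/
def discMk {n : ℕ} (G : Matrix (Fin n) (Fin n) ℚ) (T : Set (Amb n))
    (x : ↥(dualLat G T)) : disc G T := Submodule.Quotient.mk x

/-- the orthogonal complement of `T` inside the lattice `A` -/
def orthoIn {n : ℕ} (G : Matrix (Fin n) (Fin n) ℚ) (A : Submodule ℤ (Amb n))
    (T : Set (Amb n)) : Submodule ℤ (Amb n) :=
  A ⊓ ⨅ y ∈ T, LinearMap.ker (bqL G y)

def IsIntegral {n : ℕ} (G : Matrix (Fin n) (Fin n) ℚ) (A : Set (Amb n)) : Prop :=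
  ∀ x ∈ A, ∀ y ∈ A, ∃ k : ℤ, bq G x y = k

def IsEven {n : ℕ} (G : Matrix (Fin n) (Fin n) ℚ) (A : Set (Amb n)) : Prop :=
  ∀ x ∈ A, ∃ k : ℤ, bq G x x = 2 * k

def NegDef {n : ℕ} (G : Matrix (Fin n) (Fin n) ℚ) (A : Set (Amb n)) : Prop :=
  ∀ x ∈ A, x ≠ 0 → bq G x x < 0

/-- the quotient group `B/A` of a pair of lattices -/
abbrev quotBy {n : ℕ} (A B : Submodule ℤ (Amb n)) := ↥B ⧸ Submodule.comap B.subtype A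

/-- the index of `A` in `B` -/
def subIndex {n : ℕ} (A B : Submodule ℤ (Amb n)) : ℕ := Nat.card (quotBy A B)

/-- `A` is a primitive sublattice of `Q` (the quotient is torsion-free) -/
def PrimIn {n : ℕ} (A Q : Submodule ℤ (Amb n)) : Prop :=
  ∀ x ∈ Q, ∀ k : ℤ, k ≠ 0 → k • x ∈ A → x ∈ A

/-- isometry between two lattices, possibly in different ambient spaces -/
def LatIsom {n₁ n₂ : ℕ} (G₁ : Matrix (Fin n₁) (Fin n₁) ℚ) (S₁ : Submodule ℤ (Amb n₁))
    (G₂ : Matrix (Fin n₂) (Fin n₂) ℚ) (S₂ : Submodule ℤ (Amb n₂)) : Prop :=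
  ∃ φ : ↥S₁ ≃ₗ[ℤ] ↥S₂, ∀ x y : ↥S₁, bq G₁ ↑x ↑y = bq G₂ ↑(φ x) ↑(φ y)

/-! integral-coordinate lattices -/

/-- bilinear form of an integral Gram matrix on `ℤ^n` -/
def bz {n : ℕ} (H : Matrix (Fin n) (Fin n) ℤ) (x y : Fin n → ℤ) : ℤ := x ⬝ᵥ (H *ᵥ y)

/-- isometry from a ℚ-ambient lattice onto all of `ℤ^m` with Gram matrix `H` -/
def LatIsomToZ {n m : ℕ} (G : Matrix (Fin n) (Fin n) ℚ) (S : Submodule ℤ (Amb n))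
    (H : Matrix (Fin m) (Fin m) ℤ) : Prop :=
  ∃ φ : ↥S ≃ₗ[ℤ] (Fin m → ℤ), ∀ x y : ↥S, bq G ↑x ↑y = ((bz H (φ x) (φ y) : ℤ) : ℚ)

/-- `φ` is a primitive, form-preserving embedding of the lattice `S` into `ℤ^m`
with Gram matrix `H` -/
def IsPrimEmb {n m : ℕ} (G : Matrix (Fin n) (Fin n) ℚ) (S : Submodule ℤ (Amb n))
    (H : Matrix (Fin m) (Fin m) ℤ) (φ : ↥S →ₗ[ℤ] (Fin m → ℤ)) : Prop :=
  Function.Injective φ ∧ (∀ x y : ↥S, bq G ↑x ↑y = ((bz H (φ x) (φ y) : ℤ) : ℚ)) ∧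
    ∀ (v : Fin m → ℤ) (k : ℤ), k ≠ 0 → k • v ∈ LinearMap.range φ → v ∈ LinearMap.range φ

/-- isometry of `ℤ^m` with Gram matrix `H` -/
def IsIsomZ {m : ℕ} (H : Matrix (Fin m) (Fin m) ℤ) (θ : (Fin m → ℤ) ≃ₗ[ℤ] (Fin m → ℤ)) : Prop :=
  ∀ x y, bz H (θ x) (θ y) = bz H x y

/-- the standard lattice `ℤ^n ⊆ ℚ^n` -/
def stdLat (n : ℕ) : Submodule ℤ (Amb n) :=
  Submodule.span ℤ (Set.range fun i => (Pi.single i 1 : Amb n))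

/-- minimal number of generators of the discriminant group -/
def latLen {n : ℕ} (G : Matrix (Fin n) (Fin n) ℚ) (T : Set (Amb n)) : ℕ :=
  sInf {k | ∃ f : Fin k → disc G T, Submodule.span ℤ (Set.range f) = ⊤}

/-- extending the ambient space by one coordinate of square `c`, orthogonal to the rest -/
def extGram {n : ℕ} (G : Matrix (Fin n) (Fin n) ℚ) (c : ℚ) :
    Matrix (Fin (n+1)) (Fin (n+1)) ℚ :=
  Matrix.of fun i j =>
    if hi : (i : ℕ) < n then
      if hj : (j : ℕ) < n then G ⟨i, hi⟩ ⟨j, hj⟩ else 0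
    else if (j : ℕ) < n then 0 else c

/-- extending a vector by a zero coordinate -/
def extV {n : ℕ} (x : Amb n) : Amb (n+1) :=
  fun k => if h : (k : ℕ) < n then x ⟨k, h⟩ else 0

/-- the added last basis vector -/
def lastV (n : ℕ) : Amb (n+1) := Pi.single (Fin.last n) 1



/-! ### The lattice `W` and the K3 lattice `Λ` -/

/-- entries of the Gram matrix of `W = D4⁴ ⊕ A1² ⊕ ⟨-4⟩ ⊕ ⟨4⟩ ⊕ ⟨2⟩ ⊕ ⟨2⟩` -/
def gramWent (i j : ℕ) : ℚ :=
  if i < 16 ∧ j < 16 then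
    if i / 4 = j / 4 then
      if i = j then -2 else if i % 4 = 2 ∨ j % 4 = 2 then 1 else 0
    else 0
  else if i = j then
    if i < 18 then -2 else if i = 18 then -4 else if i = 19 then 4 else 2
  else 0

def gramW : Matrix (Fin 22) (Fin 22) ℚ := Matrix.of fun i j => gramWent i j

/-- standard basis vectors of the 22-dimensional ambient space -/
def sb (i : Fin 22) : Amb 22 := Pi.single i 1

def eW (i : Fin 4) : Amb 22 := sb ⟨i.1, by have := i.isLt; omega⟩
def fW (i : Fin 4) : Amb 22 := sb ⟨i.1 + 4, by have := i.isLt; omega⟩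
def gW (i : Fin 4) : Amb 22 := sb ⟨i.1 + 8, by have := i.isLt; omega⟩
def hW (i : Fin 4) : Amb 22 := sb ⟨i.1 + 12, by have := i.isLt; omega⟩
def a1V : Amb 22 := sb 16
def a2V : Amb 22 := sb 17
def sgV : Amb 22 := sb 18
def rhV : Amb 22 := sb 19
def om1V : Amb 22 := sb 20
def om2V : Amb 22 := sb 21

def chiV : Amb 22 := (2:ℚ)⁻¹ • (rhV + sgV)
def alV : Amb 22 := (4:ℚ)⁻¹ • (rhV + sgV) + (2:ℚ)⁻¹ • (eW 0 + eW 1 + fW 0 + fW 3)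
def beV : Amb 22 := (4:ℚ)⁻¹ • (rhV - sgV) + (2:ℚ)⁻¹ • (fW 0 + fW 1 + gW 0 + gW 3)
def gaV : Amb 22 := (4:ℚ)⁻¹ • (rhV + sgV) + (2:ℚ)⁻¹ • (gW 0 + gW 1 + hW 0 + hW 3)
def deV : Amb 22 := (4:ℚ)⁻¹ • (rhV - sgV) + (2:ℚ)⁻¹ • (hW 0 + hW 1 + eW 0 + eW 3)
def epV : Amb 22 := (2:ℚ)⁻¹ • (rhV + fW 1 + fW 3 + hW 1 + hW 3 + a1V + a2V)
def zeV : Amb 22 := (2:ℚ)⁻¹ • (eW 0 + fW 0 + eW 3 + fW 1 + a1V + om1V)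
def etV : Amb 22 := (2:ℚ)⁻¹ • (eW 0 + fW 0 + eW 3 + fW 1 + a2V + om2V)

/-- the K3 lattice `Λ`, as an overlattice of `W` -/
def Lam : Submodule ℤ (Amb 22) :=
  Submodule.span ℤ (Set.range sb ∪ {chiV, alV, beV, gaV, deV, epV, zeV, etV})

/-! ### The order-4 isometry `τ` -/

def tauEnt (k j : ℕ) : ℚ :=
  if k < 4 then (if j = k + 12 then 1 else 0)
  else if k < 16 then (if j = k - 4 then 1 else 0)
  else if k = 16 then (if j = 17 then 1 else 0)
  else if k = 17 then (if j = 16 then 1 else 0)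
  else if k = 18 then (if j = 18 then -1 else 0)
  else (if j = k then 1 else 0)

def tauMat : Matrix (Fin 22) (Fin 22) ℚ := Matrix.of fun k j => tauEnt k j

/-- the isometry `τ` (as a linear endomorphism of the ambient space) -/
def tauL : Amb 22 →ₗ[ℚ] Amb 22 := tauMat.mulVecLin

/-- the invariant lattice `Λ^τ` -/
def FixTau : Submodule ℤ (Amb 22) :=
  Lam ⊓ (LinearMap.ker (tauL - LinearMap.id)).restrictScalars ℤ

/-- the invariant lattice `Λ^{τ²}` -/
def FixTau2 : Submodule ℤ (Amb 22) :=
  Lam ⊓ (LinearMap.ker (tauL ∘ₗ tauL - LinearMap.id)).restrictScalars ℤ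

/-- the coinvariant lattice `Ω₄ = (Λ^τ)^⊥ ∩ Λ` -/
def Om4 : Submodule ℤ (Amb 22) := orthoIn gramW Lam ↑FixTau

/-- `Ω₂`, spanned by the listed eight elements -/
def Om2 : Submodule ℤ (Amb 22) :=
  Submodule.span ℤ {alV - gaV, beV - deV, eW 0 - gW 0, eW 2 - gW 2,
    fW 0 - hW 0, fW 1 - hW 1, fW 2 - hW 2, fW 3 - hW 3}

/-- `R`, the orthogonal complement of `Ω₂` in `Ω₄` -/
def Rlat : Submodule ℤ (Amb 22) := orthoIn gramW Om4 ↑Om2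

/-! ### The K3 lattice in its standard integral form -/

/-- negative definite `E8` Gram matrix entries (Bourbaki numbering of the Dynkin diagram) -/
def e8ent (i j : ℕ) : ℤ :=
  if i = j then -2
  else if (i, j) ∈ ([(0,2),(2,0),(1,3),(3,1),(2,3),(3,2),(3,4),(4,3),
      (4,5),(5,4),(5,6),(6,5),(6,7),(7,6)] : List (ℕ × ℕ)) then 1
  else 0

def e8mat : Matrix (Fin 8) (Fin 8) ℤ := Matrix.of fun i j => e8ent i.1 j.1

/-- Gram matrix of `Λ_K3 = E8² ⊕ U³` -/
def k3ent (i j : ℕ) : ℤ :=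
  if i < 8 ∧ j < 8 then e8ent i j
  else if 8 ≤ i ∧ i < 16 ∧ 8 ≤ j ∧ j < 16 then e8ent (i - 8) (j - 8)
  else if 16 ≤ i ∧ i < 22 ∧ 16 ≤ j ∧ j < 22 ∧ (i - 16) / 2 = (j - 16) / 2 then
    (if i = j then 0 else 1)
  else 0

def gramK3 : Matrix (Fin 22) (Fin 22) ℤ := Matrix.of fun i j => k3ent i.1 j.1

/-! ### The exceptional lattice `M` -/

/-- Gram matrix of `A3⁴ ⊕ A1²` -/
def gramMent (i j : ℕ) : ℚ :=
  if i < 12 ∧ j < 12 ∧ i / 3 = j / 3 then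
    (if i = j then -2 else if i + 1 = j ∨ j + 1 = i then 1 else 0)
  else if i = j then -2 else 0

def gramM : Matrix (Fin 14) (Fin 14) ℚ := Matrix.of fun i j => gramMent i.1 j.1

def mb (i : Fin 14) : Amb 14 := Pi.single i 1

/-- the glue vector `μ` -/
def muM : Amb 14 :=
  (4:ℚ)⁻¹ • ((mb 0 + (2:ℚ) • mb 1 + (3:ℚ) • mb 2) + (mb 3 + (2:ℚ) • mb 4 + (3:ℚ) • mb 5)
    + (mb 6 + (2:ℚ) • mb 7 + (3:ℚ) • mb 8) + (mb 9 + (2:ℚ) • mb 10 + (3:ℚ) • mb 11))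
  + (2:ℚ)⁻¹ • (mb 12 + mb 13)

/-- the exceptional lattice `M = M_{ℤ/4ℤ}` -/
def Mlat : Submodule ℤ (Amb 14) := Submodule.span ℤ (Set.range mb ∪ {muM})

/-! ### The Nikulin lattice `N` -/

def gramN8 : Matrix (Fin 8) (Fin 8) ℚ := Matrix.diagonal fun _ => -2

def nb (i : Fin 8) : Amb 8 := Pi.single i 1

def nuN : Amb 8 := (2:ℚ)⁻¹ • (∑ i : Fin 8, nb i)

/-- the Nikulin lattice -/
def Nlat : Submodule ℤ (Amb 8) := Submodule.span ℤ (Set.range nb ∪ {nuN})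

/-! ### The ambient space for `Γ`: `Ŵ ⊕ A1⁸` (coordinates 0–13 for `Ŵ`, 14–21 Nikulin) -/

def gamEnt (i j : ℕ) : ℚ :=
  if i < 8 ∧ j < 8 then
    (if i / 4 = j / 4 then (if i = j then -2 else if i % 4 = 2 ∨ j % 4 = 2 then 1 else 0) else 0)
  else if i = j then
    (if i < 10 then -4 else if i = 10 then -8 else if i = 11 then 8
     else if i < 14 then 4 else -2)
  else 0

def gramGam : Matrix (Fin 22) (Fin 22) ℚ := Matrix.of fun i j => gamEnt i.1 j.1

/-- the projection `π : W ⊗ ℚ → Ŵ ⊗ ℚ` (realized inside the `Γ`-ambient space) -/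
def piEnt (k j : ℕ) : ℚ :=
  if k < 8 then (if j = k ∨ j = k + 8 then 1 else 0)
  else if k < 14 then (if j = k + 8 then 1 else 0)
  else 0

def piMat : Matrix (Fin 22) (Fin 22) ℚ := Matrix.of fun k j => piEnt k.1 j.1

def piL : Amb 22 →ₗ[ℚ] Amb 22 := piMat.mulVecLin

/-- `R̂ = π(Ω₄)` -/
def Rhat : Submodule ℤ (Amb 22) := Submodule.map (piL.restrictScalars ℤ) Om4

/-- the Nikulin curves inside the `Γ`-ambient space (coordinates 14,…,21) -/
def nG (i : Fin 8) : Amb 22 := sb ⟨14 + i.1, by have := i.isLt; omega⟩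

def nuG : Amb 22 := (2:ℚ)⁻¹ • (∑ i : Fin 8, nG i)

/-- the copy of the Nikulin lattice inside the `Γ`-ambient space -/
def NlatG : Submodule ℤ (Amb 22) := Submodule.span ℤ (Set.range nG ∪ {nuG})

/-- `x₁ = (n₃+n₄+n₅+n₈+σ̂)/2` -/
def x1G : Amb 22 := (2:ℚ)⁻¹ • (nG 2 + nG 3 + nG 4 + nG 7 + sb 10)

/-- `x₂ = (n₃+n₄+(ê₁−f̂₁)+(ê₄−f̂₄))/2 + (â₁−â₂+σ̂)/4` -/
def x2G : Amb 22 :=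
  (2:ℚ)⁻¹ • (nG 2 + nG 3 + (sb 0 - sb 4) + (sb 3 - sb 7)) + (4:ℚ)⁻¹ • (sb 8 - sb 9 + sb 10)

/-- the lattice `Γ` -/
def GamLat : Submodule ℤ (Amb 22) :=
  Submodule.span ℤ ((Rhat : Set (Amb 22)) ∪ (NlatG : Set (Amb 22)) ∪ {x1G, x2G})


/-! ### further generic notions -/

/-- `Q` is an overlattice of `A ⊕ B` (inside `(A ⊕ B) ⊗ ℚ`) which is an even integral
lattice and in which both `A` and `B` are primitive. -/
def OverCond {n : ℕ} (G : Matrix (Fin n) (Fin n) ℚ) (A B Q : Submodule ℤ (Amb n)) : Prop :=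
  A ⊔ B ≤ Q ∧
  Q ≤ (Submodule.span ℚ ((A ⊔ B : Submodule ℤ (Amb n)) : Set (Amb n))).restrictScalars ℤ ∧
  IsIntegral G ↑Q ∧ IsEven G ↑Q ∧ PrimIn A Q ∧ PrimIn B Q

/-- overlattice with quotient `ℤ/2ℤ` -/
def OvIdx2 {n : ℕ} (G : Matrix (Fin n) (Fin n) ℚ) (A B Q : Submodule ℤ (Amb n)) : Prop :=
  OverCond G A B Q ∧ subIndex (A ⊔ B) Q = 2

/-- overlattice with quotient `ℤ/4ℤ` -/
def OvIdx4 {n : ℕ} (G : Matrix (Fin n) (Fin n) ℚ) (A B Q : Submodule ℤ (Amb n)) : Prop :=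
  OverCond G A B Q ∧ subIndex (A ⊔ B) Q = 4 ∧ IsAddCyclic (quotBy (A ⊔ B) Q)

/-- the lattice `S` admits a primitive embedding into `ℤ^m` with Gram matrix `H`,
and any two such embeddings are conjugate by an isometry of the target. -/
def PrimEmbUnique {n m : ℕ} (G : Matrix (Fin n) (Fin n) ℚ) (S : Submodule ℤ (Amb n))
    (H : Matrix (Fin m) (Fin m) ℤ) : Prop :=
  (∃ φ, IsPrimEmb G S H φ) ∧
    ∀ φ ψ, IsPrimEmb G S H φ → IsPrimEmb G S H ψ →
      ∃ θ : (Fin m → ℤ) ≃ₗ[ℤ] (Fin m → ℤ), IsIsomZ H θ ∧ ∀ x, θ (φ x) = ψ x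

/-- compatibility of a function on the discriminant group with the discriminant
quadratic form (this characterizes the discriminant quadratic form). -/
def qCompat {n : ℕ} (G : Matrix (Fin n) (Fin n) ℚ) (T : Set (Amb n))
    (Qf : disc G T → AddCircle (2:ℚ)) : Prop :=
  ∀ x : ↥(dualLat G T), Qf (discMk G T x) = ((bq G ↑x ↑x : ℚ) : AddCircle (2:ℚ))

/-- two classes of the discriminant group are related by an isometry of the lattice
(an isometry of the ℤ-span of `T` is encoded as an ambient isometry preserving the span
of `T` and fixing its orthogonal complement pointwise). -/
def discRel {n : ℕ} (G : Matrix (Fin n) (Fin n) ℚ) (T : Set (Amb n))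
    (a b : disc G T) : Prop :=
  ∃ φ : Amb n ≃ₗ[ℚ] Amb n,
    (∀ x y, bq G (φ x) (φ y) = bq G x y) ∧
    (φ '' (Submodule.span ℤ T : Set (Amb n)) = (Submodule.span ℤ T : Set (Amb n))) ∧
    (∀ x, (∀ s ∈ T, bq G x s = 0) → φ x = x) ∧
    ∃ u v : ↥(dualLat G T), φ ↑u = (v : Amb n) ∧ a = discMk G T u ∧ b = discMk G T v

/-- two overlattices `Q`, `Q'` of `S ⊕ K` are isomorphic: there is an isometry of
`S ⊕ K` carrying `S` to `S` and `K` to `K` whose ℚ-linear extension carries `Q` to `Q'`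
(encoded as an ambient isometry, which is precisely such an extension). -/
def isoRelQ {n : ℕ} (G : Matrix (Fin n) (Fin n) ℚ) (S K : Submodule ℤ (Amb n))
    (Q Q' : Submodule ℤ (Amb n)) : Prop :=
  ∃ φ : Amb n ≃ₗ[ℚ] Amb n,
    (∀ x y, bq G (φ x) (φ y) = bq G x y) ∧
    φ '' (S : Set (Amb n)) = (S : Set (Amb n)) ∧
    φ '' (K : Set (Amb n)) = (K : Set (Amb n)) ∧
    φ '' (Q : Set (Amb n)) = (Q' : Set (Amb n))

/-- two elements of the dual lattice of `S` are in the same orbit of the discriminant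
group under the action induced by `O(S)`. -/
def orbRelEl {n : ℕ} (G : Matrix (Fin n) (Fin n) ℚ) (S : Submodule ℤ (Amb n))
    (u v : ↥(dualLat G (S : Set (Amb n)))) : Prop :=
  ∃ φ : Amb n ≃ₗ[ℚ] Amb n,
    (∀ x y, bq G (φ x) (φ y) = bq G x y) ∧
    φ '' (S : Set (Amb n)) = (S : Set (Amb n)) ∧
    (∀ x, (∀ s ∈ (S : Set (Amb n)), bq G x s = 0) → φ x = x) ∧
    φ ↑u - ↑v ∈ S



/-! ### Coordinate descriptions of the lattices -/

lemma bq_gramW (x y : Amb 22) : bq gramW x y =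
    (-2 * (x 0 * y 0 + x 1 * y 1 + x 2 * y 2 + x 3 * y 3)
      + x 2 * (y 0 + y 1 + y 3) + (x 0 + x 1 + x 3) * y 2)
    + (-2 * (x 4 * y 4 + x 5 * y 5 + x 6 * y 6 + x 7 * y 7)
      + x 6 * (y 4 + y 5 + y 7) + (x 4 + x 5 + x 7) * y 6)
    + (-2 * (x 8 * y 8 + x 9 * y 9 + x 10 * y 10 + x 11 * y 11)
      + x 10 * (y 8 + y 9 + y 11) + (x 8 + x 9 + x 11) * y 10)
    + (-2 * (x 12 * y 12 + x 13 * y 13 + x 14 * y 14 + x 15 * y 15)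
      + x 14 * (y 12 + y 13 + y 15) + (x 12 + x 13 + x 15) * y 14)
    - 2 * (x 16 * y 16) - 2 * (x 17 * y 17) - 4 * (x 18 * y 18) + 4 * (x 19 * y 19)
    + 2 * (x 20 * y 20) + 2 * (x 21 * y 21) := by
  simp only [bq, dotProduct, mulVec, gramW, Matrix.of_apply, Fin.sum_univ_succ, gramWent]
  simp [Fin.succ]
  ring

lemma mem_orthoIn {n : ℕ} (G : Matrix (Fin n) (Fin n) ℚ) (A : Submodule ℤ (Amb n))
    (T : Set (Amb n)) (x : Amb n) : x ∈ orthoIn G A T ↔ x ∈ A ∧ ∀ y ∈ T, bq G x y = 0 := by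
  simp only [orthoIn, Submodule.mem_inf, Submodule.mem_iInf, LinearMap.mem_ker]
  rfl

/-- Coordinates of a vector of `Λ` in terms of its integral coefficients on the thirty
generators. -/
lemma exists_coeff_of_mem_Lam {x : Amb 22} (hx : x ∈ Lam) :
    ∃ (m : Fin 22 → ℤ) (k a b c d n p q : ℤ),
      (x 0 = m 0 + (a + d + p + q) / 2 ∧ x 1 = m 1 + a / 2 ∧ x 2 = m 2 ∧
        x 3 = m 3 + (d + p + q) / 2) ∧
      (x 4 = m 4 + (a + b + p + q) / 2 ∧ x 5 = m 5 + (b + n + p + q) / 2 ∧ x 6 = m 6 ∧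
        x 7 = m 7 + (a + n) / 2) ∧
      (x 8 = m 8 + (b + c) / 2 ∧ x 9 = m 9 + c / 2 ∧ x 10 = m 10 ∧ x 11 = m 11 + b / 2) ∧
      (x 12 = m 12 + (c + d) / 2 ∧ x 13 = m 13 + (d + n) / 2 ∧ x 14 = m 14 ∧
        x 15 = m 15 + (c + n) / 2) ∧
      (x 16 = m 16 + (n + p) / 2 ∧ x 17 = m 17 + (n + q) / 2) ∧
      (x 18 = m 18 + k / 2 + (a - b + c - d) / 4 ∧
        x 19 = m 19 + k / 2 + n / 2 + (a + b + c + d) / 4) ∧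
      x 20 = m 20 + p / 2 ∧ x 21 = m 21 + q / 2 := by
  simp only [Lam, Submodule.span_union, Submodule.mem_sup, Submodule.mem_span_insert,
    Submodule.mem_span_singleton, Submodule.mem_span_range_iff_exists_fun] at hx
  obtain ⟨_, ⟨m, rfl⟩, _, ⟨k, _, ⟨a, _, ⟨b, _, ⟨c, _, ⟨d, _, ⟨n, _, ⟨p, _, ⟨q, rfl⟩, rfl⟩,
    rfl⟩, rfl⟩, rfl⟩, rfl⟩, rfl⟩, rfl⟩, rfl⟩ := hx
  have hm (j : Fin 22) : (∑ i, m i • sb i) j = m j := by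
    simp [sb, Pi.single_apply]
  refine ⟨m, k, a, b, c, d, n, p, q, ?_⟩
  simp only [Pi.add_apply, hm]
  simp [chiV, alV, beV, gaV, deV, epV, zeV, etV, eW, fW, gW, hW, a1V, a2V, sgV, rhV, om1V, om2V,
    sb]
  refine ⟨⟨?_, ?_, ?_⟩, ⟨?_, ?_, ?_⟩, ⟨?_, ?_, ?_⟩, ⟨?_, ?_, ?_⟩, ⟨?_, ?_⟩, ⟨?_, ?_⟩, ?_, ?_⟩ <;>
    ring

lemma sb_mem_Lam (i : Fin 22) : sb i ∈ Lam :=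
  Submodule.subset_span (Or.inl ⟨i, rfl⟩)

lemma mem_FixTau (y : Amb 22) : y ∈ FixTau ↔ y ∈ Lam ∧
    ((y 4 = y 0 ∧ y 8 = y 0 ∧ y 12 = y 0) ∧ (y 5 = y 1 ∧ y 9 = y 1 ∧ y 13 = y 1) ∧
      (y 6 = y 2 ∧ y 10 = y 2 ∧ y 14 = y 2) ∧ (y 7 = y 3 ∧ y 11 = y 3 ∧ y 15 = y 3)) ∧
    y 17 = y 16 ∧ y 18 = 0 := by
  have key : tauL y = y ↔
      ((y 4 = y 0 ∧ y 8 = y 0 ∧ y 12 = y 0) ∧ (y 5 = y 1 ∧ y 9 = y 1 ∧ y 13 = y 1) ∧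
        (y 6 = y 2 ∧ y 10 = y 2 ∧ y 14 = y 2) ∧ (y 7 = y 3 ∧ y 11 = y 3 ∧ y 15 = y 3)) ∧
      y 17 = y 16 ∧ y 18 = 0 := by
    rw [funext_iff]
    simp only [tauL, Matrix.mulVecLin_apply, dotProduct, mulVec, tauMat, Matrix.of_apply,
      Fin.sum_univ_succ, tauEnt, Fin.forall_fin_succ]
    simp [Fin.succ]
    grind
  rw [← key]
  simp [FixTau, sub_eq_zero]

lemma mem_Om4 (x : Amb 22) : x ∈ Om4 ↔ x ∈ Lam ∧
    x 0 + x 4 + x 8 + x 12 = 0 ∧ x 1 + x 5 + x 9 + x 13 = 0 ∧ x 2 + x 6 + x 10 + x 14 = 0 ∧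
    x 3 + x 7 + x 11 + x 15 = 0 ∧ x 16 + x 17 = 0 ∧ x 19 = 0 ∧ x 20 = 0 ∧ x 21 = 0 := by
  rw [Om4, mem_orthoIn]
  refine and_congr_right fun _ => ⟨fun h => ?_, ?_⟩
  · -- Orbit sums of basis vectors are invariant; the Gram matrix of `D4` is invertible.
    have hL (i j k l : Fin 22) : sb i + sb j + sb k + sb l ∈ Lam :=
      add_mem (add_mem (add_mem (sb_mem_Lam i) (sb_mem_Lam j)) (sb_mem_Lam k)) (sb_mem_Lam l)
    have h0 := h (sb 0 + sb 4 + sb 8 + sb 12)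
      ((mem_FixTau _).2 ⟨hL _ _ _ _, by simp [sb]⟩)
    have h1 := h (sb 1 + sb 5 + sb 9 + sb 13)
      ((mem_FixTau _).2 ⟨hL _ _ _ _, by simp [sb]⟩)
    have h2 := h (sb 2 + sb 6 + sb 10 + sb 14)
      ((mem_FixTau _).2 ⟨hL _ _ _ _, by simp [sb]⟩)
    have h3 := h (sb 3 + sb 7 + sb 11 + sb 15)
      ((mem_FixTau _).2 ⟨hL _ _ _ _, by simp [sb]⟩)
    have h4 := h (sb 16 + sb 17)
      ((mem_FixTau _).2 ⟨add_mem (sb_mem_Lam _) (sb_mem_Lam _), by simp [sb]⟩)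
    have h5 := h (sb 19) ((mem_FixTau _).2 ⟨sb_mem_Lam _, by simp [sb]⟩)
    have h6 := h (sb 20) ((mem_FixTau _).2 ⟨sb_mem_Lam _, by simp [sb]⟩)
    have h7 := h (sb 21) ((mem_FixTau _).2 ⟨sb_mem_Lam _, by simp [sb]⟩)
    rw [bq_gramW] at h0 h1 h2 h3 h4 h5 h6 h7
    simp [sb] at h0 h1 h2 h3 h4 h5 h6 h7
    refine ⟨?_, ?_, ?_, ?_, ?_, h5, h6, h7⟩ <;> linarith
  · rintro ⟨h0, h1, h2, h3, h4, h5, h6, h7⟩ y hy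
    obtain ⟨-, ⟨⟨e1, e2, e3⟩, ⟨e4, e5, e6⟩, ⟨e7, e8, e9⟩, ⟨e10, e11, e12⟩⟩, e13, e14⟩ :=
      (mem_FixTau y).1 hy
    rw [bq_gramW, e1, e2, e3, e4, e5, e6, e7, e8, e9, e10, e11, e12, e13, e14, h5, h6, h7]
    linear_combination (-2 * y 0 + y 2) * h0 + (-2 * y 1 + y 2) * h1 +
      (-2 * y 2 + y 0 + y 1 + y 3) * h2 + (-2 * y 3 + y 2) * h3 - 2 * y 16 * h4

lemma mem_Om2 {x : Amb 22} : x ∈ Om2 ↔ ∃ c : Fin 8 → ℤ,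
    x = c 0 • (alV - gaV) + (c 1 • (beV - deV) + (c 2 • (eW 0 - gW 0) + (c 3 • (eW 2 - gW 2) +
      (c 4 • (fW 0 - hW 0) + (c 5 • (fW 1 - hW 1) + (c 6 • (fW 2 - hW 2) +
        c 7 • (fW 3 - hW 3))))))) := by
  simp only [Om2, Submodule.mem_span_insert, Submodule.mem_span_singleton]
  constructor
  · rintro ⟨c0, _, ⟨c1, _, ⟨c2, _, ⟨c3, _, ⟨c4, _, ⟨c5, _, ⟨c6, _, ⟨c7, rfl⟩, rfl⟩, rfl⟩, rfl⟩,
      rfl⟩, rfl⟩, rfl⟩, rfl⟩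
    exact ⟨![c0, c1, c2, c3, c4, c5, c6, c7], by simp⟩
  · rintro ⟨c, rfl⟩
    exact ⟨_, _, ⟨_, _, ⟨_, _, ⟨_, _, ⟨_, _, ⟨_, _, ⟨_, _, ⟨_, rfl⟩, rfl⟩, rfl⟩, rfl⟩, rfl⟩, rfl⟩,
      rfl⟩, rfl⟩

lemma coord_of_Om2 (c : Fin 8 → ℤ) (x : Amb 22)
    (hx : x = c 0 • (alV - gaV) + (c 1 • (beV - deV) + (c 2 • (eW 0 - gW 0) +
      (c 3 • (eW 2 - gW 2) + (c 4 • (fW 0 - hW 0) + (c 5 • (fW 1 - hW 1) +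
        (c 6 • (fW 2 - hW 2) + c 7 • (fW 3 - hW 3)))))))) :
    ((x 0 = c 0 / 2 - c 1 / 2 + c 2 ∧ x 1 = c 0 / 2 ∧ x 2 = c 3 ∧ x 3 = -c 1 / 2) ∧
      (x 4 = c 0 / 2 + c 1 / 2 + c 4 ∧ x 5 = c 1 / 2 + c 5 ∧ x 6 = c 6 ∧ x 7 = c 0 / 2 + c 7)) ∧
    ((x 8 = -x 0 ∧ x 9 = -x 1 ∧ x 10 = -x 2 ∧ x 11 = -x 3) ∧
      (x 12 = -x 4 ∧ x 13 = -x 5 ∧ x 14 = -x 6 ∧ x 15 = -x 7)) ∧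
    x 16 = 0 ∧ x 17 = 0 ∧ x 18 = 0 ∧ x 19 = 0 ∧ x 20 = 0 ∧ x 21 = 0 := by
  subst hx
  simp [alV, beV, gaV, deV, eW, fW, gW, hW, sgV, rhV, sb]
  and_intros <;> ring

lemma Om2_le_Lam : Om2 ≤ Lam := by
  have hV {v : Amb 22} (hv : v ∈ ({chiV, alV, beV, gaV, deV, epV, zeV, etV} : Set (Amb 22))) :
      v ∈ Lam := Submodule.subset_span (Or.inr hv)
  rw [Om2, Submodule.span_le]
  rintro x (rfl | rfl | rfl | rfl | rfl | rfl | rfl | rfl)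
  · exact sub_mem (hV (by simp)) (hV (by simp))
  · exact sub_mem (hV (by simp)) (hV (by simp))
  all_goals exact sub_mem (sb_mem_Lam _) (sb_mem_Lam _)

lemma Om2_le_Om4 : Om2 ≤ Om4 := by
  intro x hx
  obtain ⟨c, hc⟩ := mem_Om2.1 hx
  obtain ⟨-, ⟨⟨h0, h1, h2, h3⟩, ⟨h4, h5, h6, h7⟩⟩, g0, g1, g2, g3, g4, g5⟩ := coord_of_Om2 c x hc
  refine (mem_Om4 x).2 ⟨Om2_le_Lam hx, ?_, ?_, ?_, ?_, ?_, ?_, ?_, ?_⟩ <;> linarith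

/-- `R` is the `τ²`-invariant part of `Ω₄`. -/
lemma mem_Rlat (x : Amb 22) : x ∈ Rlat ↔ x ∈ Om4 ∧
    (x 8 = x 0 ∧ x 9 = x 1 ∧ x 10 = x 2 ∧ x 11 = x 3) ∧
    (x 12 = x 4 ∧ x 13 = x 5 ∧ x 14 = x 6 ∧ x 15 = x 7) := by
  rw [Rlat, mem_orthoIn]
  refine and_congr_right fun _ => ⟨fun h => ?_, ?_⟩
  · have t (y : Amb 22) (hy : y ∈ ({alV - gaV, beV - deV, eW 0 - gW 0, eW 2 - gW 2,
        fW 0 - hW 0, fW 1 - hW 1, fW 2 - hW 2, fW 3 - hW 3} : Set (Amb 22))) :=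
      (bq_gramW x y).symm.trans (h y (Submodule.subset_span hy))
    have h0 := t (alV - gaV) (by simp)
    have h1 := t (beV - deV) (by simp)
    have h2 := t (eW 0 - gW 0) (by simp)
    have h3 := t (eW 2 - gW 2) (by simp)
    have h4 := t (fW 0 - hW 0) (by simp)
    have h5 := t (fW 1 - hW 1) (by simp)
    have h6 := t (fW 2 - hW 2) (by simp)
    have h7 := t (fW 3 - hW 3) (by simp)
    clear t
    simp [alV, beV, gaV, deV, eW, fW, gW, hW, sgV, rhV, sb]
      at h0 h1 h2 h3 h4 h5 h6 h7
    refine ⟨⟨?_, ?_, ?_, ?_⟩, ?_, ?_, ?_, ?_⟩ <;> linarith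
  · rintro ⟨⟨h0, h1, h2, h3⟩, h4, h5, h6, h7⟩ y hy
    obtain ⟨c, hc⟩ := mem_Om2.1 hy
    obtain ⟨-, ⟨⟨e0, e1, e2, e3⟩, ⟨e4, e5, e6, e7⟩⟩, g0, g1, g2, g3, g4, g5⟩ :=
      coord_of_Om2 c y hc
    rw [bq_gramW, h0, h1, h2, h3, h4, h5, h6, h7, e0, e1, e2, e3, e4, e5, e6, e7,
      g0, g1, g2, g3, g4, g5]
    ring

lemma Om2_inf_Rlat : Om2 ⊓ Rlat = ⊥ := by
  rw [eq_bot_iff]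
  rintro x ⟨hx, hR⟩
  obtain ⟨c, hc⟩ := mem_Om2.1 hx
  obtain ⟨-, ⟨⟨e0, e1, e2, e3⟩, ⟨e4, e5, e6, e7⟩⟩, g0, g1, g2, g3, g4, g5⟩ := coord_of_Om2 c x hc
  obtain ⟨-, ⟨h0, h1, h2, h3⟩, h4, h5, h6, h7⟩ := (mem_Rlat x).1 hR
  have h : ∀ i, x i = 0 := by
    simp only [Fin.forall_fin_succ]
    simp [Fin.succ]
    refine ⟨?_, ?_, ?_, ?_, ?_, ?_, ?_, ?_, ?_, ?_, ?_, ?_, ?_, ?_, ?_, ?_, ?_, ?_, ?_, ?_, ?_, ?_⟩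
      <;> linarith
  exact (Submodule.mem_bot ℤ).2 (funext h)

/-! ### The quotient map -/

/-- Four rational functionals, integral on `Ω₄`, whose reductions mod `2` cut out
`Ω₂ ⊕ R` in `Ω₄`. Each depends only on `x + τ²x`. -/
def glueFun (x : Amb 22) : Fin 4 → ℚ :=
  ![x 2 + x 10, (x 0 + x 8) + (x 1 + x 9) - (x 3 + x 11), 2 * (x 1 + x 9), x 0 + x 8 + 2 * x 16]

lemma glueFun_add (x y : Amb 22) : glueFun (x + y) = glueFun x + glueFun y := by
  ext i
  fin_cases i <;> simp [glueFun] <;> ring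

lemma glueFun_integral {x : Amb 22} (hx : x ∈ Om4) : ∃ z : Fin 4 → ℤ, ∀ i, glueFun x i = z i := by
  obtain ⟨hL, -, -, -, -, -, h19, h20, h21⟩ := (mem_Om4 x).1 hx
  obtain ⟨m, k, a, b, c, d, n, p, q, ⟨e0, e1, e2, e3⟩, -, ⟨e8, e9, e10, e11⟩, -, ⟨e16, -⟩,
    ⟨-, e19⟩, e20, e21⟩ := exists_coeff_of_mem_Lam hL
  refine ⟨![m 2 + m 10, m 0 + m 8 + m 1 + m 9 - m 3 - m 11 + a + c, 2 * m 1 + 2 * m 9 + a + c,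
    m 0 + m 8 + 2 * m 16 - k - 2 * m 19 - m 20 - m 21 - 2 * m 20], ?_⟩
  simp only [Fin.forall_fin_succ]
  simp [glueFun]
  refine ⟨?_, ?_, ?_, ?_⟩ <;> linarith

lemma glueFun_of_mem_Om2 {x : Amb 22} (hx : x ∈ Om2) : glueFun x = 0 := by
  obtain ⟨c, hc⟩ := mem_Om2.1 hx
  obtain ⟨-, ⟨⟨e0, e1, e2, e3⟩, -⟩, g0, -⟩ := coord_of_Om2 c x hc
  simp [glueFun, e0, e1, e2, e3, g0]

lemma glueFun_of_mem_Rlat {x : Amb 22} (hx : x ∈ Rlat) :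
    ∃ z : Fin 4 → ℤ, ∀ i, glueFun x i = 2 * z i := by
  obtain ⟨hO, ⟨h0, h1, h2, h3⟩, h4, h5, h6, h7⟩ := (mem_Rlat x).1 hx
  obtain ⟨hL, o0, o1, o2, o3, o4, h19, h20, h21⟩ := (mem_Om4 x).1 hO
  obtain ⟨m, k, a, b, c, d, n, p, q, ⟨e0, e1, e2, e3⟩, ⟨e4, e5, e6, e7⟩, ⟨e8, e9, e10, e11⟩, -,
    ⟨e16, -⟩, ⟨-, e19⟩, e20, e21⟩ := exists_coeff_of_mem_Lam hL
  refine ⟨![m 2, m 0 + m 1 - m 3 + a, 2 * m 1 + a,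
    m 0 + m 16 - m 1 - m 5 + m 11 - m 3 + m 21], ?_⟩
  simp only [Fin.forall_fin_succ]
  simp [glueFun]
  refine ⟨?_, ?_, ?_, ?_⟩ <;> linarith

/-- If the glue functionals are even on `x ∈ Ω₄`, the projection `(x - τ²x)/2` of `x` lies in
`Ω₂`, and the complementary projection then lies in `R`. -/
lemma mem_sup_of_even {x : Amb 22} (hx : x ∈ Om4) (z : Fin 4 → ℤ)
    (hz : ∀ i, glueFun x i = 2 * z i) : x ∈ Om2 ⊔ Rlat := by
  obtain ⟨hL, o0, o1, o2, o3, o4, h19, h20, h21⟩ := (mem_Om4 x).1 hx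
  obtain ⟨m, k, a, b, c, d, n, p, q, ⟨e0, e1, e2, e3⟩, ⟨e4, e5, e6, e7⟩, ⟨e8, e9, e10, e11⟩,
    ⟨e12, e13, e14, e15⟩, ⟨e16, e17⟩, ⟨e18, e19⟩, e20, e21⟩ := exists_coeff_of_mem_Lam hL
  have z0 := hz 0
  have z1 := hz 1
  have z2 := hz 2
  have z3 := hz 3
  simp [glueFun] at z0 z1 z2 z3
  -- The coefficients of `(x - τ²x)/2` on the generators of `Ω₂`.
  obtain ⟨C, hC⟩ : ∃ C : Fin 8 → ℤ, C = ![z 2 - 2 * m 9 - c,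
    -(2 * z 3 - 2 * m 16 - n - p + z 2 - 2 * z 1) + 2 * m 11 + b,
    z 1 - z 2 + m 9 + m 11 - m 8, z 0 - m 10,
    -z 1 + z 2 - m 12 - m 11 + 2 * m 19 + k + n - m 1,
    z 3 - z 1 - m 16 - m 13 - m 11 + m 20 + z 2 - m 1 - m 9 + k + 2 * m 19,
    -z 0 - m 14,
    -z 3 - z 2 + z 1 + m 16 - m 15 + m 9 - m 20] := ⟨_, rfl⟩
  obtain ⟨u, hu⟩ : ∃ u : Amb 22, u = C 0 • (alV - gaV) + (C 1 • (beV - deV) +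
      (C 2 • (eW 0 - gW 0) + (C 3 • (eW 2 - gW 2) + (C 4 • (fW 0 - hW 0) + (C 5 • (fW 1 - hW 1) +
        (C 6 • (fW 2 - hW 2) + C 7 • (fW 3 - hW 3))))))) := ⟨_, rfl⟩
  have huO : u ∈ Om2 := mem_Om2.2 ⟨C, hu⟩
  obtain ⟨⟨⟨u0, u1, u2, u3⟩, u4, u5, u6, u7⟩, ⟨⟨u8, u9, u10, u11⟩, u12, u13, u14, u15⟩, -⟩ :=
    coord_of_Om2 C u hu
  have hv : x - u ∈ Rlat := by
    refine (mem_Rlat _).2 ⟨sub_mem hx (Om2_le_Om4 huO), ?_⟩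
    simp [hC] at u0 u1 u2 u3 u4 u5 u6 u7
    simp only [Pi.sub_apply]
    refine ⟨⟨?_, ?_, ?_, ?_⟩, ?_, ?_, ?_, ?_⟩ <;> linarith
  exact Submodule.mem_sup.2 ⟨u, huO, x - u, hv, by abel⟩

/-- The reduction mod `2` of the glue functionals on `Ω₄`; `Int.floor` only serves to read off
the integers provided by `glueFun_integral`. -/
def glueMap : ↥Om4 →ₗ[ℤ] (Fin 4 → ZMod 2) :=
  (AddMonoidHom.mk' (fun x : ↥Om4 => fun i => ((⌊glueFun x i⌋ : ℤ) : ZMod 2)) (by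
    intro x y
    obtain ⟨z, hz⟩ := glueFun_integral x.2
    obtain ⟨w, hw⟩ := glueFun_integral y.2
    ext i
    have : glueFun (x + y : Amb 22) i = ((z i + w i : ℤ) : ℚ) := by
      rw [glueFun_add, Pi.add_apply, hz, hw, Int.cast_add]
    simp only [Submodule.coe_add, Pi.add_apply, this, hz, hw, Int.floor_intCast]
    exact Int.cast_add _ _)).toIntLinearMap

lemma glueMap_apply {x : ↥Om4} {i : Fin 4} {z : ℤ} (h : glueFun x i = z) :
    glueMap x i = (z : ZMod 2) := by
  change ((⌊glueFun x i⌋ : ℤ) : ZMod 2) = z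
  rw [h, Int.floor_intCast]

lemma ker_glueMap : LinearMap.ker glueMap = Submodule.comap Om4.subtype (Om2 ⊔ Rlat) := by
  ext x
  rw [LinearMap.mem_ker, Submodule.mem_comap, Submodule.subtype_apply]
  constructor
  · intro h
    obtain ⟨z, hz⟩ := glueFun_integral x.2
    have he (i : Fin 4) : ∃ w : ℤ, z i = 2 * w := by
      have := glueMap_apply (hz i)
      rw [h, Pi.zero_apply, eq_comm, ZMod.intCast_zmod_eq_zero_iff_dvd] at this
      exact this
    choose w hw using he
    exact mem_sup_of_even x.2 w fun i => by rw [hz, hw]; push_cast; rfl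
  · intro h
    obtain ⟨u, hu, v, hv, huv⟩ := Submodule.mem_sup.1 h
    obtain ⟨z, hz⟩ := glueFun_of_mem_Rlat hv
    ext i
    rw [glueMap_apply (z := 2 * z i)
      (by rw [← huv, glueFun_add, glueFun_of_mem_Om2 hu, zero_add, hz]; push_cast; rfl)]
    rw [Pi.zero_apply, ZMod.intCast_zmod_eq_zero_iff_dvd]
    exact ⟨z i, rfl⟩

lemma glueMap_surjective : Function.Surjective glueMap := by
  intro t
  choose w hw using fun i => ZMod.intCast_surjective (t i)
  -- The images of `g₃ - h₃`, `g₁ - h₁`, `α - δ`, `g₂ - h₂` are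
  -- `(1,0,0,0)`, `(0,1,0,1)`, `(0,1,1,0)`, `(0,1,0,0)`.
  obtain ⟨x, hx⟩ : ∃ x : Amb 22, x = w 0 • (sb 10 - sb 14) + w 3 • (sb 8 - sb 12) +
    w 2 • (alV - deV) + (w 1 - w 3 - w 2) • (sb 9 - sb 13) := ⟨_, rfl⟩
  have hL : x ∈ Lam := by
    have hS (i j : Fin 22) : sb i - sb j ∈ Lam := sub_mem (sb_mem_Lam i) (sb_mem_Lam j)
    have hA : alV - deV ∈ Lam := sub_mem (Submodule.subset_span (Or.inr (by simp)))
      (Submodule.subset_span (Or.inr (by simp)))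
    rw [hx]
    exact add_mem (add_mem (add_mem (Lam.smul_mem _ (hS _ _)) (Lam.smul_mem _ (hS _ _)))
      (Lam.smul_mem _ hA)) (Lam.smul_mem _ (hS _ _))
  have hO : x ∈ Om4 := by
    refine (mem_Om4 x).2 ⟨hL, ?_⟩
    simp [hx, alV, deV, eW, fW, hW, sgV, rhV, sb]
    ring
  have hg : ∀ i, glueFun x i = ((![w 0, w 1, 2 * w 1 - 2 * w 3 - w 2, w 3] i : ℤ) : ℚ) := by
    simp only [Fin.forall_fin_succ]
    simp [glueFun, hx, alV, deV, eW, fW, hW, sgV, rhV, sb]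
    constructor <;> ring
  refine ⟨⟨x, hO⟩, funext fun i => ?_⟩
  rw [glueMap_apply (x := ⟨x, hO⟩) (hg i), ← hw i]
  have h2 : (2 : ZMod 2) = 0 := rfl
  fin_cases i <;> simp [h2]

/-- `Ω₄` is an overlattice of `Ω₂ ⊕ R` with
`Ω₄/(Ω₂ ⊕ R) ≅ (ℤ/2ℤ)⁴`, where `R` is the orthogonal complement of `Ω₂` in `Ω₄`. -/
theorem statement6 :
    Om2 ≤ Om4 ∧ Om2 ⊓ Rlat = ⊥ ∧ Om2 ⊔ Rlat ≤ Om4 ∧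
    Nonempty (quotBy (Om2 ⊔ Rlat) Om4 ≃+ (Fin 4 → ZMod 2)) := by
  refine ⟨Om2_le_Om4, Om2_inf_Rlat,
    sup_le Om2_le_Om4 fun x hx => ((mem_Rlat x).1 hx).1, ⟨?_⟩⟩
  exact ((Submodule.quotEquivOfEq _ _ ker_glueMap.symm).trans
    (glueMap.quotKerEquivOfSurjective glueMap_surjective)).toAddEquiv

end K3Paper
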